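/- arXiv:2303.12491 — 7 statements merged into one kernel-verified Lean document; each statement's English description precedes it below -/
import Mathlib

section
/- Let G be a finite connected simple graph with twin classes C_1, …, C_k, and let S be a set of l vertices of G such that |S ∩ C_i| ≤ 1 for every i. Choose the representatives c_i so that every element of S is a representative, and let H be the reduced graph (the subgraph induced by {c_1, …, c_k}). Then the Steiner distance of S computed in H equals the Steiner distance of S computed in G: d_H(S) = d_G(S). -/
open SimpleGraph

/-- Two vertices `u` and `v` of a simple graph are *twins* if
`N(u) \ {v} = N(v) \ {u}`, where `N` denotes the open neighborhood. -/
def IsTwin {V : Type*} (G : SimpleGraph V) (u v : V) : Prop :=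
  G.neighborSet u \ {v} = G.neighborSet v \ {u}

/-- The *Steiner distance* of a set `S` of vertices of `G`: the minimum number of edges
of a connected subgraph of `G` containing all vertices of `S`. -/
noncomputable def steinerDist {V : Type*} (G : SimpleGraph V) (S : Set V) : ℕ :=
  sInf {n | ∃ T : G.Subgraph, T.Connected ∧ S ⊆ T.verts ∧ T.edgeSet.ncard = n}

theorem steiner_push {V W : Type*} [Finite V] (G : SimpleGraph V) (H : SimpleGraph W) (f : V → W)
    (hf : ∀ u v, G.Adj u v → f u ≠ f v → H.Adj (f u) (f v)) (S : Set V) (S' : Set W)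
    (hS : S' ⊆ f '' S) (T : G.Subgraph) (hT : T.Connected) (hST : S ⊆ T.verts) :
    ∃ T' : H.Subgraph, T'.Connected ∧ S' ⊆ T'.verts ∧ T'.edgeSet.ncard ≤ T.edgeSet.ncard := by
  let T' : H.Subgraph :=
    { verts := f '' T.verts
      Adj := fun x y => x ≠ y ∧ ∃ u v, T.Adj u v ∧ f u = x ∧ f v = y
      adj_sub := by
        rintro x y ⟨hne, u, v, huv, rfl, rfl⟩
        exact hf u v huv.adj_sub hne
      edge_vert := by
        rintro x y ⟨hne, u, v, huv, rfl, rfl⟩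
        exact ⟨u, T.edge_vert huv, rfl⟩
      symm := ⟨by
        rintro x y ⟨hne, u, v, huv, rfl, rfl⟩
        exact ⟨hne.symm, v, u, huv.symm, rfl, rfl⟩⟩ }
  refine ⟨T', ?_, ?_, ?_⟩
  · rw [Subgraph.connected_iff] at hT ⊢
    obtain ⟨hp, hn⟩ := hT
    refine ⟨⟨?_⟩, hn.image f⟩
    rintro ⟨_, u, hu, rfl⟩ ⟨_, v, hv, rfl⟩
    have h := hp.coe ⟨u, hu⟩ ⟨v, hv⟩
    rw [reachable_iff_reflTransGen] at h ⊢
    refine Relation.ReflTransGen.lift' (fun x : T.verts => (⟨f x, x, x.2, rfl⟩ : T'.verts)) ?_ _ _ h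
    intro a b hab
    by_cases he : f a = f b
    · have : (⟨f a, a, a.2, rfl⟩ : T'.verts) = ⟨f b, b, b.2, rfl⟩ := Subtype.ext he
      change Relation.ReflTransGen T'.coe.Adj ⟨f a, a, a.2, rfl⟩ ⟨f b, b, b.2, rfl⟩
      rw [this]
    · exact Relation.ReflTransGen.single ⟨he, a, b, hab, rfl, rfl⟩
  · exact hS.trans (Set.image_mono hST)
  · have hsub : T'.edgeSet ⊆ Sym2.map f '' T.edgeSet := by
      intro e
      induction e with | _ x y
      rintro ⟨hne, u, v, huv, rfl, rfl⟩
      exact ⟨s(u, v), huv, rfl⟩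
    exact (Set.ncard_le_ncard hsub (Set.toFinite _)).trans (Set.ncard_image_le (Set.toFinite _))

theorem steiner_le {V W : Type*} [Finite V] (G : SimpleGraph V) (H : SimpleGraph W) (f : V → W)
    (hf : ∀ u v, G.Adj u v → f u ≠ f v → H.Adj (f u) (f v)) (S : Set V) (S' : Set W)
    (hS : S' ⊆ f '' S) (hex : ∃ T : G.Subgraph, T.Connected ∧ S ⊆ T.verts) :
    steinerDist H S' ≤ steinerDist G S := by
  obtain ⟨T₀, h₀, h₁⟩ := hex
  obtain ⟨T, hT, hST, hn⟩ := Nat.sInf_mem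
    (s := {n | ∃ T : G.Subgraph, T.Connected ∧ S ⊆ T.verts ∧ T.edgeSet.ncard = n})
    ⟨_, T₀, h₀, h₁, rfl⟩
  obtain ⟨T', a, b, d⟩ := steiner_push G H f hf S S' hS T hT hST
  unfold steinerDist
  rw [← hn]
  refine le_trans (Nat.sInf_le ?_) d
  exact ⟨T', a, b, rfl⟩

/-- Let `G` be a finite connected simple graph with twin classes
`C 1, …, C k`, and let `S` be a set of vertices meeting each twin class in at most one
vertex.  Choose the representatives `c i` so that every element of `S` is a
representative (`S ⊆ Set.range c`), and let `H` be the reduced graph, i.e. the subgraph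
induced by `{c 1, …, c k}`.  Then the Steiner distance of `S` computed in `H` equals the
Steiner distance of `S` computed in `G`. -/
theorem steinerDist_reducedGraph_eq {V : Type*} [Fintype V] (G : SimpleGraph V)
    (hG : G.Connected)
    (k : ℕ) (C : Fin k → Set V) (c : Fin k → V)
    (hC : ∀ i, C i = {v | IsTwin G (c i) v})
    (hcover : ∀ v : V, ∃ i, v ∈ C i)
    (hdisj : ∀ i j, i ≠ j → Disjoint (C i) (C j))
    (S : Set V) (hone : ∀ i, (S ∩ C i).Subsingleton) (hrep : S ⊆ Set.range c) :
    steinerDist (G.induce (Set.range c)) (Subtype.val ⁻¹' S) = steinerDist G S := by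
  classical
  choose g hg using hcover
  have hcc : ∀ i, c i ∈ C i := by
    intro i
    rw [hC]
    exact rfl
  have huniq : ∀ i v, v ∈ C i → g v = i := by
    intro i v hv
    by_contra hne
    exact Set.disjoint_left.1 (hdisj _ _ hne) (hg v) hv
  have hgc : ∀ i, g (c i) = i := fun i => huniq i _ (hcc i)
  have htw : ∀ v w, w ≠ v → w ≠ c (g v) → G.Adj v w → G.Adj (c (g v)) w := by
    intro v w h1 h2 h
    have hv := hg v
    rw [hC] at hv
    have hv' : G.neighborSet (c (g v)) \ {v} = G.neighborSet v \ {c (g v)} := hv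
    have : w ∈ G.neighborSet v \ {c (g v)} := ⟨h, h2⟩
    rw [← hv'] at this
    exact this.1
  have hadj : ∀ u v, G.Adj u v → c (g u) ≠ c (g v) → G.Adj (c (g u)) (c (g v)) := by
    intro u v h hne
    have h1 : G.Adj (c (g u)) v := by
      refine htw u v h.ne' ?_ h
      intro he
      apply hne
      rw [he, hgc]
    exact (htw v (c (g u)) h1.ne hne h1.symm).symm
  let f : V → Set.range c := fun v => ⟨c (g v), g v, rfl⟩
  have hf : ∀ u v, G.Adj u v → f u ≠ f v → (G.induce (Set.range c)).Adj (f u) (f v) := by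
    intro u v h hne
    exact hadj u v h (fun he => hne (Subtype.ext he))
  have hS : (Subtype.val ⁻¹' S : Set (Set.range c)) ⊆ f '' S := by
    rintro ⟨_, i, rfl⟩ hx
    exact ⟨c i, hx, Subtype.ext (by simp [f, hgc])⟩
  have htop : (⊤ : G.Subgraph).Connected := by
    rw [Subgraph.connected_iff']
    exact Subgraph.topIso.connected_iff.2 hG
  refine le_antisymm (steiner_le G _ f hf S _ hS ⟨⊤, htop, by simp⟩) ?_
  obtain ⟨T', a, b, -⟩ := steiner_push G _ f hf S _ hS ⊤ htop (by simp)
  refine steiner_le _ G Subtype.val (fun u v h _ => h) _ S ?_ ⟨T', a, b⟩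
  intro x hx
  exact ⟨⟨x, hrep hx⟩, hx, rfl⟩
end

section
/- Let G be a finite connected simple graph with twin classes C_1, …, C_k, and let S be a set of m ≥ 2 vertices with S ⊆ C_i for some i such that the subgraph of G induced by C_i is edgeless (totally disconnected). Then the Steiner distance of S in G equals m. -/
open SimpleGraph

theorem aux_exists_adj {W : Type*} (H : SimpleGraph W) (hH : H.Preconnected) (a b : W)
    (hab : a ≠ b) : ∃ x, H.Adj a x := by
  obtain ⟨p⟩ := hH a b
  cases p with
  | nil => exact absurd rfl hab
  | cons h _ => exact ⟨_, h⟩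

/-- Let `G` be a finite connected simple graph with twin classes
`C 1, …, C k`, and let `S` be a set of `m ≥ 2` vertices with `S ⊆ C i` for some `i` such
that the subgraph of `G` induced by `C i` is edgeless (totally disconnected).  Then the
Steiner distance of `S` in `G` equals `m`. -/
theorem steinerDist_of_subset_edgeless_twinClass {V : Type*} [Fintype V]
    (G : SimpleGraph V) (hG : G.Connected)
    (k : ℕ) (C : Fin k → Set V) (c : Fin k → V)
    (hC : ∀ i, C i = {v | IsTwin G (c i) v})
    (hcover : ∀ v : V, ∃ i, v ∈ C i)
    (hdisj : ∀ i j, i ≠ j → Disjoint (C i) (C j))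
    (i : Fin k) (hedgeless : ∀ u ∈ C i, ∀ v ∈ C i, ¬ G.Adj u v)
    (S : Finset V) (m : ℕ) (hm : 2 ≤ m) (hcard : S.card = m)
    (hsub : (S : Set V) ⊆ C i) :
    steinerDist G (S : Set V) = m := by
  classical
  have hN : ∀ u ∈ C i, ∀ w, G.Adj (c i) w ↔ G.Adj u w := by
    intro u hu w
    have hc : c i ∈ C i := by rw [hC i]; rfl
    have h1 : ¬ G.Adj (c i) u := hedgeless _ hc _ hu
    have ht : IsTwin G (c i) u := by rw [hC i] at hu; exact hu
    have h := Set.ext_iff.1 ht w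
    simp only [Set.mem_sdiff, SimpleGraph.mem_neighborSet, Set.mem_singleton_iff] at h
    constructor
    · intro hw
      exact (h.1 ⟨hw, fun e => h1 (e ▸ hw)⟩).1
    · intro hw
      exact (h.2 ⟨hw, fun e => h1 (e ▸ hw).symm⟩).1
  have hS2 : 1 < S.card := by omega
  obtain ⟨a, ha, b, hb, hab⟩ := Finset.one_lt_card.1 hS2
  obtain ⟨w, hw⟩ := aux_exists_adj G hG.preconnected a b hab
  have hwS : ∀ s ∈ S, G.Adj w s := fun s hs =>
    ((hN s (hsub hs) w).1 ((hN a (hsub ha) w).2 hw)).symm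
  have hwn : w ∉ S := fun h => hedgeless _ (hsub ha) _ (hsub h) hw
  have hmem : m ∈ {n | ∃ T : G.Subgraph, T.Connected ∧ (S : Set V) ⊆ T.verts ∧
      T.edgeSet.ncard = n} := by
    let T : G.Subgraph :=
      { verts := insert w (S : Set V)
        Adj := fun x y => (x = w ∧ y ∈ S) ∨ (y = w ∧ x ∈ S)
        adj_sub := by
          rintro x y (⟨rfl, h⟩ | ⟨rfl, h⟩)
          · exact hwS _ h
          · exact (hwS _ h).symm
        edge_vert := by
          rintro x y (⟨rfl, h⟩ | ⟨rfl, h⟩)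
          · exact Set.mem_insert _ _
          · exact Set.mem_insert_of_mem _ h
        symm := ⟨fun x y h => Or.symm h⟩ }
    refine ⟨T, ?_, Set.subset_insert _ _, ?_⟩
    · rw [SimpleGraph.Subgraph.connected_iff']
      rw [SimpleGraph.connected_iff_exists_forall_reachable]
      refine ⟨⟨w, Set.mem_insert _ _⟩, ?_⟩
      rintro ⟨x, hx⟩
      rcases hx with rfl | hx
      · exact SimpleGraph.Reachable.refl _
      · apply SimpleGraph.Adj.reachable
        exact Or.inl ⟨rfl, hx⟩
    · have : T.edgeSet = (fun s => s(w, s)) '' (S : Set V) := by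
        ext e
        induction e with
        | _ x y =>
          simp only [SimpleGraph.Subgraph.mem_edgeSet, Set.mem_image, T, Sym2.eq_iff]
          constructor
          · rintro (⟨rfl, h⟩ | ⟨rfl, h⟩)
            · exact ⟨y, h, Or.inl ⟨rfl, rfl⟩⟩
            · exact ⟨x, h, Or.inr ⟨rfl, rfl⟩⟩
          · rintro ⟨s, hs, ⟨rfl, rfl⟩ | ⟨rfl, rfl⟩⟩
            · exact Or.inl ⟨rfl, hs⟩
            · exact Or.inr ⟨rfl, hs⟩
      rw [this, Set.ncard_image_of_injective, Set.ncard_coe_finset, hcard]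
      intro x y h
      have h' := Sym2.eq_iff.1 h
      grind
  unfold steinerDist
  apply le_antisymm (Nat.sInf_le hmem)
  apply le_csInf ⟨m, hmem⟩
  rintro n ⟨T, hT, hST, rfl⟩
  have hex : ∀ s ∈ S, ∃ x, T.Adj s x := by
    intro s hs
    obtain ⟨t, ht, hts⟩ := Finset.exists_mem_ne hS2 s
    obtain ⟨x, hx⟩ := aux_exists_adj T.coe (SimpleGraph.Subgraph.connected_iff'.1 hT).preconnected
      ⟨s, hST hs⟩ ⟨t, hST ht⟩ (fun e => hts (Subtype.ext_iff.1 e).symm)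
    exact ⟨x, hx⟩
  choose! f hf using hex
  rw [← hcard, ← Set.ncard_coe_finset]
  apply Set.ncard_le_ncard_of_injOn (fun s => s(s, f s))
  · intro s hs
    exact hf s hs
  · intro s hs t ht h
    rcases Sym2.eq_iff.1 h with h | h
    · exact h.1
    · have h2 := (hf t ht).adj_sub
      rw [← h.1] at h2
      exact absurd h2 (hedgeless _ (hsub ht) _ (hsub hs))
end

section
/- Let G be a finite connected simple graph with twin classes C_1, …, C_k, representatives c_i ∈ C_i, and reduced graph H. Let S be a set of m vertices of G which meets at least two twin classes, i.e., l := |I(S)| > 1 where I(S) = {i : S ∩ C_i ≠ ∅}. Then the Steiner distance of S in G equals d_H(S_r) + Σ_{i ∈ I(S)} (t_i − 1), where S_r = {c_i : i ∈ I(S)}, t_i = |S ∩ C_i|, and d_H(S_r) is the Steiner distance of S_r in H. -/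
open SimpleGraph

theorem edgeSet_ncard_coe {V : Type*} (G : SimpleGraph V) (T : G.Subgraph) :
    T.edgeSet.ncard = T.coe.edgeSet.ncard := by
  rw [← Subgraph.image_coe_edgeSet_coe]
  exact Set.ncard_image_of_injective _ (Sym2.map.injective Subtype.val_injective)

theorem exists_verts_of_steiner {V : Type*} [Fintype V] (G : SimpleGraph V) (S : Set V)
    (hG : G.Connected) :
    ∃ W : Finset V, S ⊆ W ∧ (G.induce (W : Set V)).Connected ∧ W.card ≤ steinerDist G S + 1 := by
  classical
  have hne : {n | ∃ T : G.Subgraph, T.Connected ∧ S ⊆ T.verts ∧ T.edgeSet.ncard = n}.Nonempty := by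
    refine ⟨_, ⊤, ?_, fun x _ => trivial, rfl⟩
    rw [Subgraph.connected_iff']
    exact (Subgraph.topIso (G := G)).connected_iff.mpr hG
  obtain ⟨T, hT, hS, hn⟩ := Nat.sInf_mem hne
  refine ⟨T.verts.toFinset, by simpa using hS, ?_, ?_⟩
  · rw [Set.coe_toFinset]; exact hT.induce_verts
  · have h := (Subgraph.connected_iff'.mp hT).card_vert_le_card_edgeSet_add_one
    rw [edgeSet_ncard_coe] at hn
    unfold steinerDist
    rw [← hn, ← Nat.card_coe_set_eq]
    rw [Set.toFinset_card, ← Nat.card_eq_fintype_card]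
    exact h

theorem steiner_le_of_verts {V : Type*} (G : SimpleGraph V) (S : Set V)
    (W : Finset V) (hSW : S ⊆ W) (hW : (G.induce (W : Set V)).Connected) :
    steinerDist G S + 1 ≤ W.card := by
  classical
  obtain ⟨F, hF, hT⟩ := hW.exists_isTree_le
  let T : G.Subgraph :=
    { verts := (W : Set V)
      Adj := fun a b => ∃ (ha : a ∈ (W : Set V)) (hb : b ∈ (W : Set V)), F.Adj ⟨a, ha⟩ ⟨b, hb⟩
      adj_sub := by
        rintro a b ⟨ha, hb, h⟩
        exact hF h
      edge_vert := by
        rintro a b ⟨ha, hb, h⟩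
        exact ha
      symm := ⟨by
        rintro a b ⟨ha, hb, h⟩
        exact ⟨hb, ha, h.symm⟩⟩ }
  have hTc : T.coe = F := by
    ext a b
    exact ⟨fun ⟨_, _, h⟩ => h, fun h => ⟨a.2, b.2, h⟩⟩
  have hcard := hT.card_edgeFinset
  have h1 : T.edgeSet.ncard = F.edgeFinset.card := by
    rw [edgeSet_ncard_coe, hTc, ← Set.ncard_coe_finset, coe_edgeFinset]
  have h2 : steinerDist G S ≤ T.edgeSet.ncard := by
    refine Nat.sInf_le ⟨T, ?_, hSW, rfl⟩
    rw [Subgraph.connected_iff', hTc]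
    exact hT.connected
  have h3 : Fintype.card ((W : Set V) : Type _) = W.card := by simp
  omega

theorem connected_transfer {A B ι : Type*} (G : SimpleGraph A) (H : SimpleGraph B)
    (p : A → ι) (q : B → ι)
    (hadj : ∀ x y x' y', p x = q x' → p y = q y' → p x ≠ p y → G.Adj x y → H.Adj x' y')
    (hpq : ∀ a, ∃ b, p a = q b) (hqp : ∀ b, ∃ a, p a = q b)
    (hnt : ∀ a, ∃ b, p b ≠ p a) (hG : G.Connected) : H.Connected := by
  have same : ∀ a x y, p a = q x → p a = q y → H.Reachable x y := by
    intro a x y hx hy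
    obtain ⟨b, hb⟩ := hnt a
    obtain ⟨w⟩ := hG.preconnected a b
    obtain ⟨d, -, h1, h2⟩ := w.exists_boundary_dart {v | p v = p a} rfl hb
    obtain ⟨z, hz⟩ := hpq d.snd
    have h1' : p d.fst = p a := h1
    have hne : p d.fst ≠ p d.snd := fun h => h2 (show p d.snd = p a by rw [← h, h1'])
    have e1 := hadj _ _ x z (h1'.trans hx) hz hne d.adj
    have e2 := hadj _ _ y z (h1'.trans hy) hz hne d.adj
    exact e1.reachable.trans e2.reachable.symm
  have key : ∀ a b (w : G.Walk a b) x y, p a = q x → p b = q y → H.Reachable x y := by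
    intro a b w
    induction w with
    | nil => intro x y hx hy; exact same _ x y hx hy
    | @cons u v w h _ ih =>
      intro x y hx hy
      by_cases huv : p u = p v
      · exact ih x y (huv ▸ hx) hy
      · obtain ⟨z, hz⟩ := hpq v
        exact (hadj _ _ x z hx hz huv h).reachable.trans (ih z y hz hy)
  obtain ⟨a⟩ := hG.nonempty
  obtain ⟨b, -⟩ := hpq a
  haveI : Nonempty B := ⟨b⟩
  refine ⟨fun x y => ?_⟩
  obtain ⟨a, ha⟩ := hqp x
  obtain ⟨b, hb⟩ := hqp y
  obtain ⟨w⟩ := hG.preconnected a b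
  exact key a b w x y ha hb

theorem count_lower {V ι : Type*} [DecidableEq V] [DecidableEq ι] (p : V → ι) (S W : Finset V)
    (h : S ⊆ W) :
    (W.image p).card + ∑ i ∈ S.image p, ((S.filter (p · = i)).card - 1) ≤ W.card := by
  rw [Finset.card_eq_sum_card_image p W, Finset.card_eq_sum_ones]
  have h1 : ∑ i ∈ S.image p, ((S.filter (p · = i)).card - 1) ≤
      ∑ i ∈ W.image p, ((S.filter (p · = i)).card - 1) :=
    Finset.sum_le_sum_of_subset (Finset.image_subset_image h)
  refine (Nat.add_le_add_left h1 _).trans ?_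
  rw [← Finset.sum_add_distrib]
  refine Finset.sum_le_sum fun i hi => ?_
  have h2 : (S.filter (p · = i)).card ≤ (W.filter (p · = i)).card :=
    Finset.card_le_card (Finset.filter_subset_filter _ h)
  have h3 : 0 < (W.filter (p · = i)).card := by
    obtain ⟨w, hw, rfl⟩ := Finset.mem_image.mp hi
    exact Finset.card_pos.mpr ⟨w, by simp [hw]⟩
  omega

theorem count_upper {V ι : Type*} [DecidableEq V] [DecidableEq ι] (p : V → ι) (c : ι → V)
    (S : Finset V) (J : Finset ι) (h : S.image p ⊆ J) :
    (S ∪ (J \ S.image p).image c).card ≤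
      J.card + ∑ i ∈ S.image p, ((S.filter (p · = i)).card - 1) := by
  have h1 := Finset.card_union_le S ((J \ S.image p).image c)
  have h2 : ((J \ S.image p).image c).card ≤ (J \ S.image p).card := Finset.card_image_le
  have h3 := Finset.card_sdiff_add_card_eq_card h
  have h4 : S.card = ∑ i ∈ S.image p, ((S.filter (p · = i)).card - 1) + (S.image p).card := by
    rw [Finset.card_eq_sum_card_image p S, Finset.card_eq_sum_ones (S.image p),
      ← Finset.sum_add_distrib]
    refine Finset.sum_congr rfl fun i hi => ?_
    have h3 : 0 < (S.filter (p · = i)).card := by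
      obtain ⟨w, hw, rfl⟩ := Finset.mem_image.mp hi
      exact Finset.card_pos.mpr ⟨w, by simp [hw]⟩
    omega
  omega

/-- Let `G` be a finite connected simple graph with twin classes
`C 1, …, C k`, representatives `c i ∈ C i`, and reduced graph `H` (the subgraph induced
by the representatives).  Let `S` be a set of `m` vertices of `G` which meets at least
two twin classes, i.e. `l := |I(S)| > 1` where `I(S) = {i : S ∩ C i ≠ ∅}`.  Then the
Steiner distance of `S` in `G` equals `d_H(S_r) + Σ_{i ∈ I(S)} (t i − 1)`, where
`S_r = {c i : i ∈ I(S)}`, `t i = |S ∩ C i|`, and `d_H(S_r)` is the Steiner distance of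
`S_r` in `H`. -/
theorem steinerDist_eq_of_meets_two_classes {V : Type*} [Fintype V] [DecidableEq V]
    (G : SimpleGraph V) (hG : G.Connected)
    (k : ℕ) (C : Fin k → Finset V) (c : Fin k → V)
    (hC : ∀ i, (C i : Set V) = {v | IsTwin G (c i) v})
    (hcover : ∀ v : V, ∃ i, v ∈ C i)
    (hdisj : ∀ i j, i ≠ j → Disjoint (C i) (C j))
    (S : Finset V) (m : ℕ) (hcard : S.card = m)
    (hl : 2 ≤ (Finset.univ.filter fun i => (S ∩ C i).Nonempty).card) :
    steinerDist G (S : Set V) =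
      steinerDist (G.induce (Set.range c))
          (Subtype.val ⁻¹'
            (((Finset.univ.filter fun i => (S ∩ C i).Nonempty).image c : Finset V) : Set V)) +
        ∑ i ∈ Finset.univ.filter (fun i => (S ∩ C i).Nonempty), ((S ∩ C i).card - 1) := by
  classical
  have hmem : ∀ i v, v ∈ C i ↔ IsTwin G (c i) v := fun i v => by
    rw [← Finset.mem_coe, hC]; rfl
  have hcC : ∀ i, c i ∈ C i := fun i => (hmem i _).2 rfl
  have huniq : ∀ i j v, v ∈ C i → v ∈ C j → i = j := fun i j v h1 h2 => by
    by_contra hne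
    exact Finset.disjoint_left.mp (hdisj i j hne) h1 h2
  choose p hp using hcover
  have hpi : ∀ i v, v ∈ C i ↔ p v = i :=
    fun i v => ⟨fun h => huniq _ _ v (hp v) h, fun h => h ▸ hp v⟩
  have hpc : ∀ i, p (c i) = i := fun i => (hpi _ _).1 (hcC i)
  have hstep : ∀ u v, p u ≠ p v → (G.Adj u v ↔ G.Adj (c (p u)) v) := by
    intro u v hne
    have ht : G.neighborSet (c (p u)) \ {u} = G.neighborSet u \ {c (p u)} := (hmem _ _).1 (hp u)
    have hv := Set.ext_iff.mp ht v
    have h1 : v ≠ u := fun h => hne (h ▸ rfl)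
    have h2 : v ≠ c (p u) := fun h => hne (by rw [h, hpc])
    simpa [h1, h2] using hv.symm
  have hadjc : ∀ u v, p u ≠ p v → (G.Adj u v ↔ G.Adj (c (p u)) (c (p v))) := by
    intro u v hne
    rw [hstep u v hne, G.adj_comm, hstep v (c (p u)) (by rw [hpc]; exact hne.symm), G.adj_comm]
  have hadj : ∀ u v u' v', p u = p u' → p v = p v' → p u ≠ p v → G.Adj u v → G.Adj u' v' := by
    intro u v u' v' hu hv hne h
    rw [hadjc u v hne, hu, hv] at h
    exact (hadjc u' v' (by rwa [← hu, ← hv])).2 h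
  have hI : (Finset.univ.filter fun i => (S ∩ C i).Nonempty) = S.image p := by
    ext i
    simp [Finset.Nonempty, hpi]
  have hf : ∀ i, S ∩ C i = S.filter (p · = i) := fun i => by
    ext v; simp [hpi]
  rw [hI] at hl ⊢
  simp only [hf]
  have hnt : ∀ i, ∃ s ∈ S, p s ≠ i := by
    intro i
    obtain ⟨j, hj, hne⟩ := Finset.exists_mem_ne (by omega : 1 < (S.image p).card) i
    obtain ⟨s, hs, rfl⟩ := Finset.mem_image.mp hj
    exact ⟨s, hs, hne⟩
  set H := G.induce (Set.range c) with hH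
  set R : Set (Set.range c) := Subtype.val ⁻¹' (((S.image p).image c : Finset V) : Set V) with hR
  have hcp : ∀ x : Set.range c, c (p x.1) = x.1 := by
    rintro ⟨_, i, rfl⟩; simp [hpc]
  have hRmem : ∀ x : Set.range c, x ∈ R ↔ p x.1 ∈ S.image p := by
    intro x
    simp only [hR, Set.mem_preimage, Finset.mem_coe]
    constructor
    · intro h
      obtain ⟨i, hi, h⟩ := Finset.mem_image.mp h
      rw [← h, hpc]; exact hi
    · intro h
      exact Finset.mem_image.mpr ⟨_, h, hcp x⟩
  have hHconn : H.Connected := by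
    refine connected_transfer G H p (fun x => p x.1) ?_ ?_ ?_ ?_ hG
    · intro x y x' y' h1 h2 h3 h4
      exact hadj x y x' y' h1 h2 h3 h4
    · intro a; exact ⟨⟨c (p a), p a, rfl⟩, (hpc _).symm⟩
    · intro b; exact ⟨b.1, rfl⟩
    · intro a
      obtain ⟨s, -, hs⟩ := hnt (p a)
      exact ⟨s, hs⟩
  apply le_antisymm
  · obtain ⟨W, hRW, hW, hWc⟩ := exists_verts_of_steiner H R hHconn
    set J : Finset (Fin k) := W.image (fun x => p x.1) with hJ
    have hIJ : S.image p ⊆ J := by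
      intro i hi
      refine Finset.mem_image.mpr ⟨⟨c i, i, rfl⟩, hRW ((hRmem _).2 ?_), hpc i⟩
      simpa only [hpc] using hi
    have hJc : J.card ≤ W.card := Finset.card_image_le
    have hu := count_upper p c S J hIJ
    have hpW : ∀ v ∈ S ∪ (J \ S.image p).image c, p v ∈ J := by
      intro v hv
      rcases Finset.mem_union.mp hv with h | h
      · exact hIJ (Finset.mem_image_of_mem p h)
      · obtain ⟨i, hi, rfl⟩ := Finset.mem_image.mp h
        rw [hpc]; exact (Finset.mem_sdiff.mp hi).1
    have hJW : ∀ i ∈ J, ∃ v ∈ S ∪ (J \ S.image p).image c, p v = i := by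
      intro i hi
      by_cases h : i ∈ S.image p
      · obtain ⟨s, hs, h⟩ := Finset.mem_image.mp h
        exact ⟨s, Finset.mem_union_left _ hs, h⟩
      · exact ⟨c i, Finset.mem_union_right _ (Finset.mem_image_of_mem c
          (Finset.mem_sdiff.mpr ⟨hi, h⟩)), hpc i⟩
    have hconn : (G.induce ((S ∪ (J \ S.image p).image c : Finset V) : Set V)).Connected := by
      refine connected_transfer (H.induce (W : Set (Set.range c))) _
        (fun x => p x.1.1) (fun x => p x.1) ?_ ?_ ?_ ?_ hW
      · intro x y x' y' h1 h2 h3 h4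
        exact hadj x.1.1 y.1.1 x' y' h1 h2 h3 h4
      · intro a
        obtain ⟨v, hv, h⟩ := hJW (p a.1.1)
          (Finset.mem_image_of_mem (fun x : Set.range c => p x.1) a.2)
        exact ⟨⟨v, hv⟩, h.symm⟩
      · intro b
        obtain ⟨w, hw, h⟩ := Finset.mem_image.mp (hpW b.1 b.2)
        exact ⟨⟨w, hw⟩, h⟩
      · intro a
        obtain ⟨s, hs, hne⟩ := hnt (p a.1.1)
        obtain ⟨w, hw, h⟩ := Finset.mem_image.mp (hIJ (Finset.mem_image_of_mem p hs))
        exact ⟨⟨w, hw⟩, fun h' => hne (h.symm.trans h')⟩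
    have := steiner_le_of_verts G (S : Set V) _
      (by exact_mod_cast Finset.subset_union_left) hconn
    omega
  · obtain ⟨W, hSW, hW, hWc⟩ := exists_verts_of_steiner G (S : Set V) hG
    have hSW' : S ⊆ W := by exact_mod_cast hSW
    have hlow := count_lower p S W hSW'
    set e : Fin k → Set.range c := fun i => ⟨c i, i, rfl⟩ with he
    have hUc : ((W.image p).image e).card ≤ (W.image p).card := Finset.card_image_le
    have hRU : R ⊆ (((W.image p).image e : Finset (Set.range c)) : Set (Set.range c)) := by
      intro x hx
      have h1 := Finset.image_subset_image hSW' ((hRmem x).1 hx)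
      exact Finset.mem_image.mpr ⟨_, h1, Subtype.ext (hcp x)⟩
    have hconn : (H.induce
        (((W.image p).image e : Finset (Set.range c)) : Set (Set.range c))).Connected := by
      refine connected_transfer (G.induce (W : Set V)) _
        (fun x => p x.1) (fun x => p x.1.1) ?_ ?_ ?_ ?_ hW
      · intro x y x' y' h1 h2 h3 h4
        exact hadj x y x'.1.1 y'.1.1 h1 h2 h3 h4
      · intro a
        exact ⟨⟨e (p a.1), Finset.mem_image_of_mem e (Finset.mem_image_of_mem p a.2)⟩,
          (hpc _).symm⟩
      · rintro ⟨b, hb⟩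
        obtain ⟨i, hi, rfl⟩ := Finset.mem_image.mp hb
        obtain ⟨w, hw, rfl⟩ := Finset.mem_image.mp hi
        exact ⟨⟨w, hw⟩, (hpc _).symm⟩
      · intro a
        obtain ⟨s, hs, hne⟩ := hnt (p a.1)
        exact ⟨⟨s, hSW' hs⟩, hne⟩
    have := steiner_le_of_verts H R _ hRU hconn
    omega
end

section
/- Let G be a finite connected simple graph with twin classes C_1, …, C_k of sizes n_i = |C_i|, representatives c_i ∈ C_i, and reduced graph H. Then for every m with 2 ≤ m ≤ |V(G)|, the m-Steiner Wiener index of G satisfies SW_m(G) = Σ_{i : G[C_i] complete} (m−1)·C(n_i, m) + Σ_{i : G[C_i] edgeless} m·C(n_i, m) + Σ_{S ⊆ V(G), |S| = m, |I(S)| > 1} ( d_H(S_r) + Σ_{i ∈ I(S)} (t_i − 1) ), where for each m-subset S we set I(S) = {i : S ∩ C_i ≠ ∅}, t_i = |S ∩ C_i|, S_r = {c_i : i ∈ I(S)}, and d_H(S_r) is the Steiner distance of S_r in H. -/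
open SimpleGraph

/-- The *m-Steiner Wiener index* of `G`: the sum of the Steiner distances of all
`m`-element subsets of the vertex set of `G`. -/
noncomputable def steinerWiener {V : Type*} [Fintype V] (m : ℕ) (G : SimpleGraph V) : ℕ :=
  ∑ S ∈ Finset.powersetCard m (Finset.univ : Finset V), steinerDist G (S : Set V)

theorem steiner_le_s8 {V : Type*} [Fintype V] (G : SimpleGraph V) (S : Set V) (W : Finset V)
    (hS : S ⊆ W) (hW : (G.induce (W : Set V)).Connected) : steinerDist G S + 1 ≤ W.card := by
  classical
  obtain ⟨T, hT, hTt⟩ := hW.exists_isTree_le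
  let T' : G.Subgraph :=
    { verts := W
      Adj := fun u v => ∃ (hu : u ∈ (W : Set V)) (hv : v ∈ (W : Set V)), T.Adj ⟨u, hu⟩ ⟨v, hv⟩
      adj_sub := by
        rintro u v ⟨hu, hv, h⟩
        exact hT h
      edge_vert := by
        rintro u v ⟨hu, hv, h⟩
        exact hu
      symm := ⟨by
        rintro u v ⟨hu, hv, h⟩
        exact ⟨hv, hu, h.symm⟩⟩ }
  have hc : T'.coe = T := by
    ext ⟨u, hu⟩ ⟨v, hv⟩
    constructor
    · rintro ⟨_, _, h⟩; exact h
    · intro h; exact ⟨hu, hv, h⟩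
  have hconn : T'.Connected := by
    rw [Subgraph.connected_iff']
    rw [hc]; exact hTt.connected
  have hE : T'.edgeSet.ncard = T.edgeSet.ncard := by
    rw [← Subgraph.image_coe_edgeSet_coe, hc]
    exact Set.ncard_image_of_injective _ (Sym2.map.injective Subtype.val_injective)
  have h1 : steinerDist G S ≤ T.edgeSet.ncard := Nat.sInf_le ⟨T', hconn, hS, hE⟩
  have h2 := hTt.card_edgeFinset
  rw [Set.ncard_eq_toFinset_card'] at h1
  have h3 : Fintype.card (W : Set V) = W.card := by simp
  have h4 : T.edgeFinset.card = T.edgeSet.toFinset.card := by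
    congr
  omega

theorem steiner_exists {V : Type*} [Fintype V] (G : SimpleGraph V) (hG : G.Connected) (S : Set V) :
    ∃ W : Finset V, S ⊆ W ∧ (G.induce (W : Set V)).Connected ∧ W.card ≤ steinerDist G S + 1 := by
  classical
  have hne : {n | ∃ T : G.Subgraph, T.Connected ∧ S ⊆ T.verts ∧ T.edgeSet.ncard = n}.Nonempty := by
    refine ⟨_, ⊤, ?_, ?_, rfl⟩
    · rw [Subgraph.connected_iff']
      exact (Subgraph.topIso.connected_iff).2 hG
    · simp
  obtain ⟨T, hT, hST, hE⟩ := Nat.sInf_mem hne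
  refine ⟨T.verts.toFinset, by simpa using hST, ?_, ?_⟩
  · have hcoe : ((T.verts.toFinset : Finset V) : Set V) = T.verts := by simp
    rw [hcoe]
    have := Subgraph.connected_iff'.1 hT
    exact this.mono (fun u v h => T.adj_sub h)
  · have h := (Subgraph.connected_iff'.1 hT).card_vert_le_card_edgeSet_add_one
    rw [← Subgraph.image_coe_edgeSet_coe, 
      Set.ncard_image_of_injective _ (Sym2.map.injective Subtype.val_injective)] at hE
    change _ = steinerDist G S at hE
    rw [← hE]
    rw [Set.toFinset_card, ← Nat.card_eq_fintype_card, ← Nat.card_coe_set_eq]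
    exact h

theorem conn_proj {V V' : Type*} {G : SimpleGraph V} {G' : SimpleGraph V'} (f : V → V')
    (hf : Function.Surjective f) (h : ∀ u v, G.Adj u v → f u = f v ∨ G'.Adj (f u) (f v))
    (hG : G.Connected) : G'.Connected := by
  have : ∀ u v, G.Reachable u v → G'.Reachable (f u) (f v) := by
    rintro u v ⟨w⟩
    induction w with
    | nil => exact Reachable.refl _
    | cons ha _ ih =>
      rcases h _ _ ha with h | h
      · rw [h]; exact ih
      · exact h.reachable.trans ih
  have hn := hG.nonempty
  refine (connected_iff _).2 ⟨fun a b => ?_, ⟨f hn.some⟩⟩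
  obtain ⟨u, rfl⟩ := hf a
  obtain ⟨v, rfl⟩ := hf b
  exact this _ _ (hG.preconnected u v)

theorem conn_lift {V V' : Type*} {G : SimpleGraph V} {G' : SimpleGraph V'} (s : V' → V) (p : V → V')
    (h : ∀ a b, G'.Adj a b → ∀ u v, p u = a → p v = b → G.Adj u v) (hs : ∀ a, p (s a) = a)
    (hG : G'.Connected) (hnt : Nontrivial V') : G.Connected := by
  have h1 : ∀ a b, G'.Reachable a b → G.Reachable (s a) (s b) := by
    rintro u v ⟨w⟩
    induction w with
    | nil => exact Reachable.refl _
    | cons ha _ ih => exact (h _ _ ha _ _ (hs _) (hs _)).reachable.trans ih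
  have h2 : ∀ u, G.Reachable u (s (p u)) := by
    intro u
    obtain ⟨b, hb⟩ := hG.preconnected.exists_adj_of_nontrivial (p u)
    exact (h _ _ hb u (s b) rfl (hs _)).reachable.trans (h _ _ hb _ (s b) (hs _) (hs _)).reachable.symm
  have hn := hG.nonempty
  refine (connected_iff _).2 ⟨fun a b => ?_, ⟨s hn.some⟩⟩
  exact (h2 a).trans ((h1 _ _ (hG.preconnected _ _)).trans (h2 b).symm)

theorem twin_adj {V : Type*} [DecidableEq V] (G : SimpleGraph V)
    (k : ℕ) (C : Fin k → Finset V) (c : Fin k → V)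
    (hC : ∀ i, (C i : Set V) = {v | IsTwin G (c i) v}) (i : Fin k) (u v : V) (hu : u ∈ C i)
    (hvu : v ≠ u) (hvc : v ≠ c i) : G.Adj (c i) v ↔ G.Adj u v := by
  have h : u ∈ (C i : Set V) := hu
  rw [hC] at h
  have h2 := Set.ext_iff.1 (show _ = _ from h) v
  simpa [hvu, hvc] using h2

theorem twin_class {V : Type*} [DecidableEq V] (G : SimpleGraph V)
    (k : ℕ) (C : Fin k → Finset V) (c : Fin k → V)
    (hC : ∀ i, (C i : Set V) = {v | IsTwin G (c i) v}) (i : Fin k) :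
    (∀ u ∈ C i, ∀ v ∈ C i, u ≠ v → G.Adj u v) ∨ (∀ u ∈ C i, ∀ v ∈ C i, ¬ G.Adj u v) := by
  have h := twin_adj G k C c hC i
  have hs := G.adj_comm
  have key : ∀ u ∈ C i, ∀ v ∈ C i, u ≠ v → u ≠ c i → v ≠ c i → 
      (G.Adj u v ↔ G.Adj (c i) v) ∧ (G.Adj (c i) u ↔ G.Adj (c i) v) := by
    intro u hu v hv huv huc hvc
    have h1 := h u v hu huv.symm hvc
    have h2 := h v u hv huv huc
    rw [hs v u] at h2
    tauto
  by_cases hex : ∃ u0 ∈ C i, G.Adj (c i) u0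
  · left
    obtain ⟨u0, hu0, ha⟩ := hex
    have hall : ∀ v ∈ C i, v ≠ c i → G.Adj (c i) v := by
      intro v hv hvc
      by_cases e : v = u0
      · rwa [e]
      · exact (key v hv u0 hu0 e hvc ha.ne').2.2 ha
    intro u hu v hv huv
    by_cases e1 : u = c i
    · rw [e1]; exact hall v hv (by rintro rfl; exact huv e1)
    by_cases e2 : v = c i
    · rw [e2]; exact (hall u hu e1).symm
    exact (key u hu v hv huv e1 e2).1.2 (hall v hv e2)
  · right
    push Not at hex
    intro u hu v hv ha
    by_cases e1 : u = c i
    · rw [e1] at ha; exact hex v hv ha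
    by_cases e2 : v = c i
    · rw [e2] at ha; exact hex u hu ha.symm
    exact hex v hv ((key u hu v hv ha.ne e1 e2).1.1 ha)

theorem steiner_complete {V : Type*} [Fintype V] [DecidableEq V] (G : SimpleGraph V)
    (hG : G.Connected) (S : Finset V) (hS : 1 ≤ S.card)
    (h : ∀ u ∈ S, ∀ v ∈ S, u ≠ v → G.Adj u v) : steinerDist G (S : Set V) = S.card - 1 := by
  obtain ⟨W, hSW, hW, hc⟩ := steiner_exists G hG (S : Set V)
  have h1 : S.card ≤ W.card := Finset.card_le_card (by exact_mod_cast hSW)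
  have h2 : steinerDist G (S : Set V) + 1 ≤ S.card := by
    apply steiner_le_s8 G _ S subset_rfl
    obtain ⟨x, hx⟩ := Finset.card_pos.1 hS
    refine (connected_iff _).2 ⟨?_, ⟨⟨x, hx⟩⟩⟩
    rintro ⟨a, ha⟩ ⟨b, hb⟩
    by_cases e : a = b
    · subst e; exact Reachable.refl _
    · exact Adj.reachable (h a ha b hb e)
  omega

theorem steiner_edgeless {V : Type*} [Fintype V] [DecidableEq V] (G : SimpleGraph V)
    (hG : G.Connected) (S : Finset V) (hS : 2 ≤ S.card)
    (h : ∀ u ∈ S, ∀ v ∈ S, ¬ G.Adj u v) (w : V) (hw : ∀ u ∈ S, G.Adj u w) :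
    steinerDist G (S : Set V) = S.card := by
  obtain ⟨W, hSW, hW, hc⟩ := steiner_exists G hG (S : Set V)
  have h1 : S.card < W.card := by
    apply Finset.card_lt_card
    refine ⟨by exact_mod_cast hSW, fun hWS => ?_⟩
    have : W = S := Finset.Subset.antisymm hWS (by exact_mod_cast hSW)
    subst this
    obtain ⟨a, ha, b, hb, hab⟩ := Finset.one_lt_card.1 hS
    haveI : Nontrivial (W : Set V) := ⟨⟨a, ha⟩, ⟨b, hb⟩, by simpa using hab⟩
    obtain ⟨x, hx⟩ := hW.preconnected.exists_adj_of_nontrivial ⟨a, ha⟩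
    exact h a ha x x.2 hx
  have h2 : steinerDist G (S : Set V) + 1 ≤ (insert w S).card := by
    apply steiner_le_s8 G _ (insert w S) (by simp)
    rw [connected_iff_exists_forall_reachable]
    refine ⟨⟨w, by simp⟩, ?_⟩
    rintro ⟨b, hb⟩
    by_cases e : w = b
    · subst e; exact Reachable.refl _
    · exact Adj.reachable (hw b (by simp at hb; tauto)).symm
  have := Finset.card_insert_le w S
  omega

theorem steiner_multi {V : Type*} [Fintype V] [DecidableEq V]
    (G : SimpleGraph V) (hG : G.Connected)
    (k : ℕ) (C : Fin k → Finset V) (c : Fin k → V) (p : V → Fin k)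
    (hp : ∀ v i, v ∈ C i ↔ p v = i) (hpc : ∀ i, p (c i) = i)
    (hadj : ∀ u v u' v', p u ≠ p v → p u' = p u → p v' = p v → G.Adj u v → G.Adj u' v')
    (S : Finset V) (h2 : 2 ≤ (Finset.univ.filter fun i => (S ∩ C i).Nonempty).card) :
    steinerDist G (S : Set V) = steinerDist (G.induce (Set.range c))
            (Subtype.val ⁻¹'
              (((Finset.univ.filter fun i => (S ∩ C i).Nonempty).image c : Finset V) : Set V)) +
          ∑ i ∈ Finset.univ.filter (fun i => (S ∩ C i).Nonempty), ((S ∩ C i).card - 1) := by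
  have hI : (Finset.univ.filter fun i => (S ∩ C i).Nonempty) = S.image p := by
    ext i
    simp only [Finset.mem_filter, Finset.mem_univ, true_and, Finset.mem_image]
    constructor
    · rintro ⟨x, hx⟩
      rw [Finset.mem_inter, hp] at hx
      exact ⟨x, hx⟩
    · rintro ⟨x, hx⟩
      exact ⟨x, by rw [Finset.mem_inter, hp]; exact hx⟩
  rw [hI] at h2 ⊢
  have hcinj : Function.Injective c := fun a b h => by rw [← hpc a, h, hpc]
  have hH : (G.induce (Set.range c)).Connected := by
    refine conn_proj (G := G) (fun v => ⟨c (p v), p v, rfl⟩) ?_ ?_ hG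
    · rintro ⟨_, j, rfl⟩
      exact ⟨c j, by simp [hpc]⟩
    · intro u v huv
      by_cases e : p u = p v
      · left; simp [e]
      · right
        exact hadj u v _ _ e (hpc _) (hpc _) huv
  have hcardS : S.card = ∑ i ∈ S.image p, (S ∩ C i).card := by
    rw [Finset.card_eq_sum_card_image p S]
    refine Finset.sum_congr rfl fun i _ => ?_
    congr 1
    ext x; simp [hp]
  have hpos : ∀ i ∈ S.image p, 1 ≤ (S ∩ C i).card := by
    intro i hi
    rw [← hI] at hi
    exact Finset.card_pos.2 (Finset.mem_filter.1 hi).2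
  have hsum : S.card = (S.image p).card + ∑ i ∈ S.image p, ((S ∩ C i).card - 1) := by
    rw [hcardS, Finset.card_eq_sum_ones, ← Finset.sum_add_distrib]
    refine Finset.sum_congr rfl fun i hi => ?_
    have := hpos i hi
    omega
  apply le_antisymm
  · obtain ⟨W', hSW, hW, hc⟩ := steiner_exists _ hH (Subtype.val ⁻¹' (((S.image p).image c : Finset V) : Set V))
    set J : Finset (Fin k) := W'.image (fun x => p x.1) with hJ
    have hJcard : J.card ≤ W'.card := Finset.card_image_le
    have hIJ : S.image p ⊆ J := by
      intro i hi
      rw [hJ, Finset.mem_image]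
      refine ⟨⟨c i, i, rfl⟩, ?_, hpc i⟩
      apply hSW
      simp only [Set.mem_preimage, Finset.mem_coe]
      exact Finset.mem_image_of_mem c hi
    have hmemJ : ∀ j, j ∈ J ↔ (⟨c j, j, rfl⟩ : Set.range c) ∈ W' := by
      intro j
      rw [hJ, Finset.mem_image]
      constructor
      · rintro ⟨⟨_, i, rfl⟩, hx, h⟩
        simp only [hpc] at h
        subst h; exact hx
      · intro h; exact ⟨_, h, hpc j⟩
    let W : Finset V := S ∪ (J \ S.image p).image c
    have hWc : W.card ≤ S.card + (J.card - (S.image p).card) := by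
      refine (Finset.card_union_le _ _).trans ?_
      have := Finset.card_image_le (s := J \ S.image p) (f := c)
      rw [Finset.card_sdiff_of_subset hIJ] at this
      omega
    have hWp : ∀ w ∈ W, p w ∈ J := by
      intro w hw
      rcases Finset.mem_union.1 hw with h | h
      · exact hIJ (Finset.mem_image_of_mem p h)
      · obtain ⟨j, hj, rfl⟩ := Finset.mem_image.1 h
        rw [hpc]; exact (Finset.mem_sdiff.1 hj).1
    have hsec : ∀ j ∈ J, ∃ w ∈ W, p w = j := by
      intro j hj
      by_cases hji : j ∈ S.image p
      · obtain ⟨w, hw, rfl⟩ := Finset.mem_image.1 hji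
        exact ⟨w, Finset.mem_union_left _ hw, rfl⟩
      · exact ⟨c j, Finset.mem_union_right _ (Finset.mem_image_of_mem c (Finset.mem_sdiff.2 ⟨hj, hji⟩)), hpc j⟩
    choose s hsW hsp using hsec
    have hconn : (G.induce (W : Set V)).Connected := by
      have hxJ : ∀ x : (W' : Set (Set.range c)), p x.1.1 ∈ J := fun x =>
        Finset.mem_image_of_mem (fun x : Set.range c => p x.1) x.2
      refine conn_lift (G' := (G.induce (Set.range c)).induce (W' : Set (Set.range c)))
        (fun x => ⟨s (p x.1.1) (hxJ x), hsW _ (hxJ x)⟩)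
        (fun w => ⟨⟨c (p w.1), p w.1, rfl⟩, (hmemJ _).1 (hWp _ w.2)⟩) ?_ ?_ hW ?_
      · rintro a b hab u v rfl rfl
        have hab' : G.Adj (c (p u.1)) (c (p v.1)) := hab
        refine hadj _ _ _ _ ?_ ?_ ?_ hab'
        · intro e
          rw [hpc, hpc] at e
          rw [e] at hab'
          exact hab'.ne rfl
        · rw [hpc]; rfl
        · rw [hpc]; rfl
      · rintro ⟨⟨_, j, rfl⟩, hx⟩
        have hj : j ∈ J := (hmemJ j).2 hx
        simp [hpc, hsp]
      · obtain ⟨a, ha, b, hb, hab⟩ := Finset.one_lt_card.1 h2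
        refine ⟨⟨⟨c a, a, rfl⟩, (hmemJ a).1 (hIJ ha)⟩, ⟨⟨c b, b, rfl⟩, (hmemJ b).1 (hIJ hb)⟩, ?_⟩
        intro e
        exact hab (hcinj (congrArg (fun x => x.1.1) e))
    have := steiner_le_s8 G (S : Set V) W (by simp [W]) hconn
    have := Finset.card_le_card hIJ
    omega
  · obtain ⟨W, hSW, hW, hc⟩ := steiner_exists _ hG (S : Set V)
    have hSW' : S ⊆ W := by exact_mod_cast hSW
    let W' : Finset (Set.range c) := (W.image p).image (fun i => ⟨c i, i, rfl⟩)
    have hW'c : W'.card ≤ (W.image p).card := Finset.card_image_le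
    have hmem : ∀ w ∈ W, (⟨c (p w), p w, rfl⟩ : Set.range c) ∈ W' := fun w hw =>
      Finset.mem_image_of_mem _ (Finset.mem_image_of_mem p hw)
    have hconn : ((G.induce (Set.range c)).induce (W' : Set (Set.range c))).Connected := by
      refine conn_proj (G := G.induce (W : Set V)) 
        (fun w => ⟨⟨c (p w.1), p w.1, rfl⟩, hmem w.1 w.2⟩) ?_ ?_ hW
      · rintro ⟨x, hx⟩
        obtain ⟨i, hi, rfl⟩ := Finset.mem_image.1 hx
        obtain ⟨w, hw, rfl⟩ := Finset.mem_image.1 hi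
        exact ⟨⟨w, hw⟩, rfl⟩
      · intro u v huv
        by_cases e : p u = p v
        · left; simp [e]
        · right
          exact hadj u v _ _ e (hpc _) (hpc _) huv
    have h1 := steiner_le_s8 _ (Subtype.val ⁻¹' (((S.image p).image c : Finset V) : Set V)) W' (by
      rintro ⟨_, j, rfl⟩ hx
      simp only [Set.mem_preimage, Finset.mem_coe] at hx
      obtain ⟨i, hi, e⟩ := Finset.mem_image.1 hx
      have := hcinj e
      subst this
      obtain ⟨w, hw, rfl⟩ := Finset.mem_image.1 hi
      exact hmem w (hSW' hw)) hconn
    have h3 : (W.image p).card + ∑ i ∈ S.image p, ((S ∩ C i).card - 1) ≤ W.card := by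
      have hle : ∑ i ∈ S.image p, ((S ∩ C i).card - 1) ≤ ∑ i ∈ W.image p, ((S ∩ C i).card - 1) :=
        Finset.sum_le_sum_of_subset (Finset.image_subset_image hSW')
      refine (Nat.add_le_add_left hle _).trans ?_
      rw [Finset.card_eq_sum_card_image p W, Finset.card_eq_sum_ones, ← Finset.sum_add_distrib]
      refine Finset.sum_le_sum fun i hi => ?_
      have ha : (S ∩ C i).card ≤ (W.filter (fun x => p x = i)).card := by
        apply Finset.card_le_card
        intro x hx
        rw [Finset.mem_inter, hp] at hx
        exact Finset.mem_filter.2 ⟨hSW' hx.1, hx.2⟩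
      have hb : 1 ≤ (W.filter (fun x => p x = i)).card := by
        obtain ⟨w, hw, rfl⟩ := Finset.mem_image.1 hi
        exact Finset.card_pos.2 ⟨w, Finset.mem_filter.2 ⟨hw, rfl⟩⟩
      omega
    omega

/-- Let `G` be a finite connected simple graph with twin classes
`C 1, …, C k` of sizes `n i = |C i|`, representatives `c i ∈ C i`, and reduced graph `H`.
Then for every `m` with `2 ≤ m ≤ |V(G)|`, the `m`-Steiner Wiener index of `G` satisfies
`SW_m(G) = Σ_{i : G[C i] complete} (m−1)·C(n i, m) + Σ_{i : G[C i] edgeless} m·C(n i, m)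
 + Σ_{S ⊆ V(G), |S| = m, |I(S)| > 1} (d_H(S_r) + Σ_{i ∈ I(S)} (t i − 1))`,
where `I(S) = {i : S ∩ C i ≠ ∅}`, `t i = |S ∩ C i|` and `S_r = {c i : i ∈ I(S)}`. -/
theorem steinerWiener_eq_of_twinClasses {V : Type*} [Fintype V] [DecidableEq V]
    (G : SimpleGraph V) [DecidableRel G.Adj] (hG : G.Connected)
    (k : ℕ) (C : Fin k → Finset V) (c : Fin k → V)
    (hC : ∀ i, (C i : Set V) = {v | IsTwin G (c i) v})
    (hcover : ∀ v : V, ∃ i, v ∈ C i)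
    (hdisj : ∀ i j, i ≠ j → Disjoint (C i) (C j))
    (m : ℕ) (hm : 2 ≤ m) (hmV : m ≤ Fintype.card V) :
    steinerWiener m G =
      (∑ i ∈ Finset.univ.filter (fun i => ∀ u ∈ C i, ∀ v ∈ C i, u ≠ v → G.Adj u v),
          (m - 1) * (C i).card.choose m) +
      (∑ i ∈ Finset.univ.filter (fun i => ∀ u ∈ C i, ∀ v ∈ C i, ¬ G.Adj u v),
          m * (C i).card.choose m) +
      ∑ S ∈ (Finset.powersetCard m (Finset.univ : Finset V)).filter
          (fun S => 2 ≤ (Finset.univ.filter fun i => (S ∩ C i).Nonempty).card),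
        (steinerDist (G.induce (Set.range c))
            (Subtype.val ⁻¹'
              (((Finset.univ.filter fun i => (S ∩ C i).Nonempty).image c : Finset V) : Set V)) +
          ∑ i ∈ Finset.univ.filter (fun i => (S ∩ C i).Nonempty), ((S ∩ C i).card - 1)) := by
  have hcC : ∀ i, c i ∈ C i := fun i => by
    have : c i ∈ (C i : Set V) := by rw [hC]; exact rfl
    exact this
  choose p hpC using hcover
  have hp : ∀ v i, v ∈ C i ↔ p v = i := by
    intro v i
    constructor
    · intro h
      by_contra hne
      exact Finset.disjoint_left.1 (hdisj _ _ hne) (hpC v) h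
    · rintro rfl; exact hpC v
  have hpc : ∀ i, p (c i) = i := fun i => (hp _ _).1 (hcC i)
  have hadj1 : ∀ u v, p u ≠ p v → (G.Adj (c (p u)) v ↔ G.Adj u v) := by
    intro u v h
    apply twin_adj G k C c hC (p u) u v (hpC u)
    · rintro rfl; exact h rfl
    · rintro rfl; exact h (hpc _).symm
  have hadj : ∀ u v u' v', p u ≠ p v → p u' = p u → p v' = p v → G.Adj u v → G.Adj u' v' := by
    intro u v u' v' h hu hv ha
    have h1 := hadj1 u v h
    have h2 := hadj1 u' v (by rwa [hu])
    have h3 := hadj1 v u' (by rw [hu]; exact h.symm)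
    have h4 := hadj1 v' u' (by rw [hu, hv]; exact h.symm)
    rw [hu] at h2
    rw [hv] at h4
    exact (h4.1 (h3.2 (h2.1 (h1.2 ha)).symm)).symm
  have hcl := twin_class G k C c hC
  unfold steinerWiener
  rw [← Finset.sum_filter_add_sum_filter_not (Finset.powersetCard m (Finset.univ : Finset V))
    (fun S => 2 ≤ (Finset.univ.filter fun i => (S ∩ C i).Nonempty).card), add_comm]
  congr 1
  swap
  · refine Finset.sum_congr rfl fun S hS => ?_
    exact steiner_multi G hG k C c p hp hpc hadj S (Finset.mem_filter.1 hS).2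
  have hset : (Finset.powersetCard m (Finset.univ : Finset V)).filter
      (fun S => ¬ 2 ≤ (Finset.univ.filter fun i => (S ∩ C i).Nonempty).card) =
      Finset.univ.biUnion (fun i => Finset.powersetCard m (C i)) := by
    ext S
    simp only [Finset.mem_filter, Finset.mem_powersetCard, Finset.subset_univ, true_and,
      Finset.mem_biUnion, Finset.mem_univ, not_le]
    constructor
    · rintro ⟨hc, hI⟩
      obtain ⟨x, hx⟩ := Finset.card_pos.1 (show 0 < S.card by omega)
      refine ⟨p x, ?_, hc⟩
      intro y hy
      have := Finset.card_le_one.1 (Nat.le_of_lt_succ hI) (p x)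
        (Finset.mem_filter.2 ⟨Finset.mem_univ _, x, Finset.mem_inter.2 ⟨hx, hpC x⟩⟩) (p y)
        (Finset.mem_filter.2 ⟨Finset.mem_univ _, y, Finset.mem_inter.2 ⟨hy, hpC y⟩⟩)
      rw [this]; exact hpC y
    · rintro ⟨i, hi, hc⟩
      refine ⟨hc, Nat.lt_succ_of_le (Finset.card_le_one.2 ?_)⟩
      have : ∀ a, (S ∩ C a).Nonempty → a = i := by
        rintro a ⟨x, hx⟩
        rw [Finset.mem_inter, hp] at hx
        rw [← hx.2, ← hp]
        exact hi hx.1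
      intro a ha b hb
      rw [this a (Finset.mem_filter.1 ha).2, this b (Finset.mem_filter.1 hb).2]
  rw [hset, Finset.sum_biUnion]
  swap
  · intro i _ j _ hij
    rw [Function.onFun, Finset.disjoint_left]
    intro S h1 h2
    rw [Finset.mem_powersetCard] at h1 h2
    obtain ⟨x, hx⟩ := Finset.card_pos.1 (show 0 < S.card by omega)
    exact Finset.disjoint_left.1 (hdisj i j hij) (h1.1 hx) (h2.1 hx)
  rw [Finset.sum_filter, Finset.sum_filter, ← Finset.sum_add_distrib]
  refine Finset.sum_congr rfl fun i _ => ?_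
  by_cases hlt : (C i).card < m
  · rw [Finset.powersetCard_eq_empty.2 hlt, Nat.choose_eq_zero_of_lt hlt]
    simp
  push Not at hlt
  obtain ⟨a, ha, b, hb, hab⟩ := Finset.one_lt_card.1 (show 1 < (C i).card by omega)
  rcases hcl i with h | h
  · have hn : ¬ ∀ u ∈ C i, ∀ v ∈ C i, ¬ G.Adj u v := fun h' => h' a ha b hb (h a ha b hb hab)
    rw [if_pos h, if_neg hn, add_zero, ← Finset.card_powersetCard, mul_comm, ← smul_eq_mul]
    apply Finset.sum_eq_card_nsmul
    intro S hS
    rw [Finset.mem_powersetCard] at hS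
    rw [steiner_complete G hG S (by omega) (fun u hu v hv => h u (hS.1 hu) v (hS.1 hv)), hS.2]
  · have hn : ¬ ∀ u ∈ C i, ∀ v ∈ C i, u ≠ v → G.Adj u v := fun h' => h a ha b hb (h' a ha b hb hab)
    rw [if_pos h, if_neg hn, zero_add, ← Finset.card_powersetCard, mul_comm, ← smul_eq_mul]
    apply Finset.sum_eq_card_nsmul
    intro S hS
    rw [Finset.mem_powersetCard] at hS
    haveI : Nontrivial V := ⟨a, b, hab⟩
    obtain ⟨w, hw⟩ := hG.preconnected.exists_adj_of_nontrivial a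
    have hwi : p w ≠ i := fun e => h a ha w ((hp _ _).2 e) hw
    have hpa := (hp _ _).1 ha
    rw [steiner_edgeless G hG S (by omega) (fun u hu v hv => h u (hS.1 hu) v (hS.1 hv)) w ?_, hS.2]
    intro u hu
    refine hadj a w u w (by rw [hpa]; exact hwi.symm) ?_ rfl hw
    rw [hpa]; exact (hp _ _).1 (hS.1 hu)
end

section
/- Let G be a finite connected simple graph with at least two vertices, with twin classes C_1, …, C_k of sizes n_i = |C_i|, representatives c_i ∈ C_i, and reduced graph H. Then the Wiener index of G satisfies W(G) = Σ_{i : G[C_i] complete} C(n_i, 2) + Σ_{i : G[C_i] edgeless} 2·C(n_i, 2) + Σ_{1 ≤ i < j ≤ k} n_i n_j d_H(c_i, c_j), where d_H(c_i, c_j) is the graph distance between c_i and c_j in H. -/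
open SimpleGraph

/-- The *Wiener index* of `G`: the sum of the graph distances over all unordered pairs
of distinct vertices of `G` (computed as half the sum over ordered pairs). -/
noncomputable def wienerIndex {V : Type*} [Fintype V] (G : SimpleGraph V) : ℕ :=
  (∑ u : V, ∑ v : V, G.dist u v) / 2

theorem isTwin_iff_aux {V : Type*} (G : SimpleGraph V) (u v : V) :
    IsTwin G u v ↔ ∀ w, w ≠ u → w ≠ v → (G.Adj u w ↔ G.Adj v w) := by
  unfold IsTwin
  rw [Set.ext_iff]
  simp only [Set.mem_sdiff, mem_neighborSet, Set.mem_singleton_iff]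
  constructor
  · intro h w h1 h2
    have := h w
    tauto
  · intro h w
    by_cases h1 : w = u
    · subst h1; simp
    · by_cases h2 : w = v
      · subst h2; simp
      · have := h w h1 h2
        tauto

theorem isTwin_symm_aux {V : Type*} {G : SimpleGraph V} {u v : V} (h : IsTwin G u v) :
    IsTwin G v u := Eq.symm h

theorem isTwin_trans_aux {V : Type*} {G : SimpleGraph V} {u v w : V} (h : IsTwin G u v)
    (h' : IsTwin G v w) : IsTwin G u w := by
  by_cases huv : u = v
  · subst huv; exact h'
  by_cases hvw : v = w
  · subst hvw; exact h
  by_cases huw : u = w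
  · subst huw; rfl
  rw [isTwin_iff_aux] at *
  intro x hxu hxw
  by_cases hxv : x = v
  · subst hxv
    have a := h w (Ne.symm huw) (Ne.symm hvw)
    have b := h' u huv huw
    rw [G.adj_comm u x, b, G.adj_comm w u, a, G.adj_comm]
  · rw [h x hxu hxv, h' x hxv hxw]

theorem sum_pairs_aux {V : Type*} [DecidableEq V] (s : Finset V) (f : V → V → ℕ) (a : ℕ)
    (h0 : ∀ u, f u u = 0) (h : ∀ u ∈ s, ∀ v ∈ s, u ≠ v → f u v = a) :
    ∑ u ∈ s, ∑ v ∈ s, f u v = 2 * (a * s.card.choose 2) := by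
  have h1 : ∀ u ∈ s, ∑ v ∈ s, f u v = (s.card - 1) * a := by
    intro u hu
    rw [← Finset.add_sum_erase s _ hu, h0, zero_add, ← Finset.card_erase_of_mem hu,
      Finset.sum_const_nat]
    intro v hv
    rw [Finset.mem_erase] at hv
    exact h u hu v hv.2 (Ne.symm hv.1)
  rw [Finset.sum_congr rfl h1, Finset.sum_const, smul_eq_mul]
  have h2 : s.card * (s.card - 1) = 2 * s.card.choose 2 := by
    rw [Nat.choose_two_right, Nat.mul_div_cancel' (Nat.even_mul_pred_self _).two_dvd]
  rw [← mul_assoc, h2]; ring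

theorem sum_symm_aux {k : ℕ} (d : Fin k → Fin k → ℕ) (hd : ∀ i j, d i j = d j i) :
    ∑ i, ∑ j, d i j = ∑ i, d i i +
      2 * ∑ p ∈ Finset.univ.filter (fun p : Fin k × Fin k => p.1 < p.2), d p.1 p.2 := by
  have e1 : ∑ p ∈ Finset.univ.filter (fun p : Fin k × Fin k => p.1 < p.2), d p.1 p.2
      = ∑ i, ∑ j, if i < j then d i j else 0 := by
    rw [Finset.sum_filter, Fintype.sum_prod_type]
  have e2 : ∑ p ∈ Finset.univ.filter (fun p : Fin k × Fin k => p.1 < p.2), d p.1 p.2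
      = ∑ i, ∑ j, if j < i then d i j else 0 := by
    rw [e1, Finset.sum_comm]
    refine Finset.sum_congr rfl fun i _ => Finset.sum_congr rfl fun j _ => ?_
    rw [hd]
  have e3 : ∑ i, d i i = ∑ i, ∑ j, if i = j then d i j else 0 := by
    simp
  rw [two_mul]
  nth_rewrite 1 [e1]
  rw [e2, e3, ← Finset.sum_add_distrib, ← Finset.sum_add_distrib]
  refine Finset.sum_congr rfl fun i _ => ?_
  rw [← Finset.sum_add_distrib, ← Finset.sum_add_distrib]
  refine Finset.sum_congr rfl fun j _ => ?_
  rcases lt_trichotomy i j with h | h | h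
  · simp [h, h.ne, h.not_gt]
  · simp [h]
  · simp [h, h.ne', h.not_gt]

section
variable {V : Type*} {G : SimpleGraph V} {k : ℕ} {c : Fin k → V} {r : V → Fin k}

theorem adj_iff_aux (hr : ∀ u i, r u = i ↔ IsTwin G (c i) u) {u v : V} (h : r u ≠ r v) :
    G.Adj u v ↔ G.Adj (c (r u)) (c (r v)) := by
  have hc : ∀ i, r (c i) = i := fun i => (hr _ _).2 rfl
  have hu := (hr u _).1 rfl
  have hv := (hr v _).1 rfl
  rw [isTwin_iff_aux] at hu hv
  have h1 : v ≠ c (r u) := by intro e; apply h; rw [e, hc, ]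
  have h2 : v ≠ u := by rintro rfl; exact h rfl
  have h3 : c (r u) ≠ c (r v) := by
    intro e; apply h; rw [← hc (r u), e, hc]
  rw [← hu v h1 h2, G.adj_comm (c (r u)) v, G.adj_comm (c (r u)),
    hv (c (r u)) h3 (Ne.symm h1)]

theorem walk_down_aux (hr : ∀ u i, r u = i ↔ IsTwin G (c i) u) {u v : V} (p : G.Walk u v) :
    ∃ q : (G.induce (Set.range c)).Walk ⟨c (r u), Set.mem_range_self _⟩
      ⟨c (r v), Set.mem_range_self _⟩, q.length ≤ p.length := by
  induction p with
  | nil => exact ⟨Walk.nil, le_rfl⟩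
  | @cons u w v h p ih =>
    obtain ⟨q, hq⟩ := ih
    by_cases e : r u = r w
    · have e' : (⟨c (r w), Set.mem_range_self _⟩ : Set.range c) =
        ⟨c (r u), Set.mem_range_self _⟩ := by simp [e]
      refine ⟨q.copy e' rfl, ?_⟩
      simp; omega
    · refine ⟨Walk.cons ?_ q, ?_⟩
      · simpa using (adj_iff_aux hr e).1 h
      · simp; omega

theorem walk_up_aux (hr : ∀ u i, r u = i ↔ IsTwin G (c i) u) {a b : Set.range c}
    (q : (G.induce (Set.range c)).Walk a b) : ∀ u v : V, r u = r a → r v = r b →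
    r u ≠ r v → ∃ p : G.Walk u v, p.length ≤ q.length := by
  have hc : ∀ i, r (c i) = i := fun i => (hr _ _).2 rfl
  have hcr : ∀ x : Set.range c, c (r x) = x := by
    rintro ⟨_, i, rfl⟩; simp [hc]
  induction q with
  | nil => intro u v h1 h2 h3; exact absurd (h1.trans h2.symm) h3
  | @cons a w b h q ih =>
    intro u v h1 h2 h3
    have hadj : G.Adj a w := by simpa using h
    by_cases e : r w = r v
    · have : G.Adj u v := by
        rw [adj_iff_aux hr h3, ← e, h1, hcr, hcr]; exact hadj
      exact ⟨Walk.cons this Walk.nil, by simp⟩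
    · obtain ⟨p, hp⟩ := ih w v rfl h2 e
      have hne : r u ≠ r w := by
        intro e2
        apply hadj.ne
        rw [← hcr a, ← h1, e2, hcr]
      have : G.Adj u w := by
        rw [adj_iff_aux hr hne, h1, hcr, hcr]; exact hadj
      exact ⟨Walk.cons this p, by simp; omega⟩

theorem dist_eq_aux (hG : G.Connected) (hr : ∀ u i, r u = i ↔ IsTwin G (c i) u) {u v : V}
    (h : r u ≠ r v) : G.dist u v = (G.induce (Set.range c)).dist
      ⟨c (r u), Set.mem_range_self _⟩ ⟨c (r v), Set.mem_range_self _⟩ := by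
  have hc : ∀ i, r (c i) = i := fun i => (hr _ _).2 rfl
  obtain ⟨p, hp⟩ := hG.exists_walk_length_eq_dist u v
  obtain ⟨q, hq⟩ := walk_down_aux hr p
  obtain ⟨q', hq'⟩ := q.reachable.exists_walk_length_eq_dist
  obtain ⟨p', hp'⟩ := walk_up_aux hr q' u v (hc _).symm (hc _).symm h
  have := dist_le p'
  have := dist_le q
  omega

theorem dist_two_aux (hG : G.Connected) {u v : V} (h : IsTwin G u v) (hne : u ≠ v)
    (hadj : ¬ G.Adj u v) : G.dist u v = 2 := by
  rw [isTwin_iff_aux] at h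
  obtain ⟨p⟩ := hG.preconnected u v
  cases p with
  | nil => exact absurd rfl hne
  | @cons _ w _ hw p =>
    have h1 : w ≠ v := by rintro rfl; exact hadj hw
    have h2 := (h w hw.ne' h1).1 hw
    have h3 := dist_le (Walk.cons hw (Walk.cons h2.symm Walk.nil))
    have h4 := hG.pos_dist_of_ne hne
    have h5 : G.dist u v ≠ 1 := by rwa [Ne, dist_eq_one_iff_adj]
    simp at h3
    omega

theorem dichotomy_aux {s : Set V} (hs : ∀ u ∈ s, ∀ v ∈ s, IsTwin G u v) :
    (∀ u ∈ s, ∀ v ∈ s, u ≠ v → G.Adj u v) ∨ (∀ u ∈ s, ∀ v ∈ s, ¬ G.Adj u v) := by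
  by_contra hcon
  push Not at hcon
  obtain ⟨⟨a, ha, b, hb, hab, nab⟩, x, hx, y, hy, hxy⟩ := hcon
  -- a vertex of `s` adjacent to something is adjacent to everything else
  have key : ∀ u ∈ s, ∀ v ∈ s, ∀ w ∈ s, G.Adj u v → u ≠ w → G.Adj u w := by
    intro u hu v hv w hw h1 h2
    have := (isTwin_iff_aux G v w).1 (hs v hv w hw) u h1.ne h2
    exact (this.1 h1.symm).symm
  apply nab
  by_cases e : x = a
  · subst e; exact key x hx y hy b hb hxy hab
  · exact key a ha x hx b hb (key x hx y hy a ha hxy e).symm hab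

end

/-- Let `G` be a finite connected simple graph with at least two
vertices, with twin classes `C 1, …, C k` of sizes `n i = |C i|`, representatives
`c i ∈ C i`, and reduced graph `H`.  Then the Wiener index of `G` satisfies
`W(G) = Σ_{i : G[C i] complete} C(n i, 2) + Σ_{i : G[C i] edgeless} 2·C(n i, 2)
 + Σ_{i < j} n i · n j · d_H(c i, c j)`,
where `d_H(c i, c j)` is the graph distance between `c i` and `c j` in `H`. -/
theorem wienerIndex_eq_of_twinClasses {V : Type*} [Fintype V] [DecidableEq V]
    (G : SimpleGraph V) [DecidableRel G.Adj] (hG : G.Connected)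
    (hV : 2 ≤ Fintype.card V)
    (k : ℕ) (C : Fin k → Finset V) (c : Fin k → V)
    (hC : ∀ i, (C i : Set V) = {v | IsTwin G (c i) v})
    (hcover : ∀ v : V, ∃ i, v ∈ C i)
    (hdisj : ∀ i j, i ≠ j → Disjoint (C i) (C j)) :
    wienerIndex G =
      (∑ i ∈ Finset.univ.filter (fun i => ∀ u ∈ C i, ∀ v ∈ C i, u ≠ v → G.Adj u v),
          (C i).card.choose 2) +
      (∑ i ∈ Finset.univ.filter (fun i => ∀ u ∈ C i, ∀ v ∈ C i, ¬ G.Adj u v),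
          2 * (C i).card.choose 2) +
      ∑ p ∈ Finset.univ.filter (fun p : Fin k × Fin k => p.1 < p.2),
        (C p.1).card * (C p.2).card *
          (G.induce (Set.range c)).dist ⟨c p.1, Set.mem_range_self p.1⟩
            ⟨c p.2, Set.mem_range_self p.2⟩ := by
  classical
  have hmem : ∀ i v, v ∈ C i ↔ IsTwin G (c i) v := by
    intro i v
    rw [← Finset.mem_coe, hC]; rfl
  choose r hrC using hcover
  have huniq : ∀ v i, v ∈ C i → r v = i := by
    intro v i hv
    by_contra hne
    exact Finset.disjoint_left.1 (hdisj _ _ hne) (hrC v) hv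
  have hr : ∀ u i, r u = i ↔ IsTwin G (c i) u := by
    intro u i
    rw [← hmem]
    exact ⟨fun h => h ▸ hrC u, huniq u i⟩
  have hsum : ∀ F : V → ℕ, ∑ u, F u = ∑ i, ∑ u ∈ C i, F u := by
    intro F
    rw [← Finset.sum_biUnion (fun i _ j _ h => hdisj i j h)]
    refine Finset.sum_congr ?_ fun _ _ => rfl
    ext v
    simp only [Finset.mem_univ, Finset.mem_biUnion, true_and, true_iff]
    exact ⟨_, hrC v⟩
  let d : Fin k → Fin k → ℕ := fun i j => ∑ u ∈ C i, ∑ v ∈ C j, G.dist u v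
  have hd : ∀ i j, d i j = d j i := by
    intro i j
    simp only [d]
    rw [Finset.sum_comm]
    simp only [dist_comm]
  have htot : ∑ u : V, ∑ v : V, G.dist u v = ∑ i, ∑ j, d i j := by
    rw [hsum]
    refine Finset.sum_congr rfl fun i _ => ?_
    rw [Finset.sum_comm]
    rw [hsum]
    refine Finset.sum_congr rfl fun j _ => ?_
    rw [Finset.sum_comm]
  have hoff : ∀ i j, i < j → d i j = (C i).card * (C j).card *
          (G.induce (Set.range c)).dist ⟨c i, Set.mem_range_self i⟩
            ⟨c j, Set.mem_range_self j⟩ := by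
    intro i j hij
    have : ∀ u ∈ C i, ∀ v ∈ C j, G.dist u v = (G.induce (Set.range c)).dist
        ⟨c i, Set.mem_range_self i⟩ ⟨c j, Set.mem_range_self j⟩ := by
      intro u hu v hv
      obtain rfl := huniq u i hu
      obtain rfl := huniq v j hv
      exact dist_eq_aux hG hr hij.ne
    simp only [d]
    rw [Finset.sum_congr rfl fun u hu => Finset.sum_congr rfl (this u hu)]
    simp [mul_assoc]
  have hdiag : ∀ i, d i i =
      2 * ((if ∀ u ∈ C i, ∀ v ∈ C i, u ≠ v → G.Adj u v then (C i).card.choose 2 else 0) +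
        (if ∀ u ∈ C i, ∀ v ∈ C i, ¬ G.Adj u v then 2 * (C i).card.choose 2 else 0)) := by
    intro i
    have htw : ∀ u ∈ C i, ∀ v ∈ C i, IsTwin G u v := fun u hu v hv =>
      isTwin_trans_aux (isTwin_symm_aux ((hmem i u).1 hu)) ((hmem i v).1 hv)
    have hboth : (∀ u ∈ C i, ∀ v ∈ C i, u ≠ v → G.Adj u v) →
        (∀ u ∈ C i, ∀ v ∈ C i, ¬ G.Adj u v) → (C i).card.choose 2 = 0 := by
      intro h1 h2
      apply Nat.choose_eq_zero_of_lt
      have : (C i).card ≤ 1 := by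
        rw [Finset.card_le_one]
        intro a ha b hb
        by_contra hne
        exact h2 a ha b hb (h1 a ha b hb hne)
      omega
    rcases dichotomy_aux (s := (C i : Set V)) htw with h | h
    · have h' : ∀ u ∈ C i, ∀ v ∈ C i, u ≠ v → G.Adj u v := h
      have e := sum_pairs_aux (C i) (fun u v => G.dist u v) 1 (fun u => dist_self)
        (fun u hu v hv hne => dist_eq_one_iff_adj.2 (h u hu v hv hne))
      rw [if_pos h']
      by_cases h2 : ∀ u ∈ C i, ∀ v ∈ C i, ¬ G.Adj u v
      · rw [if_pos h2]; rw [hboth h' h2] at e ⊢; simpa [d] using e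
      · rw [if_neg h2]; simpa only [one_mul, add_zero] using e
    · have h' : ∀ u ∈ C i, ∀ v ∈ C i, ¬ G.Adj u v := h
      have e := sum_pairs_aux (C i) (fun u v => G.dist u v) 2 (fun u => dist_self)
        (fun u hu v hv hne => dist_two_aux hG (htw u hu v hv) hne (h u hu v hv))
      rw [if_pos h']
      by_cases h2 : ∀ u ∈ C i, ∀ v ∈ C i, u ≠ v → G.Adj u v
      · rw [if_pos h2]; rw [hboth h2 h'] at e ⊢; simpa [d] using e
      · rw [if_neg h2]; simpa only [zero_add] using e
  unfold wienerIndex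
  rw [htot, sum_symm_aux d hd, Finset.sum_congr rfl fun i _ => hdiag i, ← Finset.mul_sum,
    ← mul_add, Nat.mul_div_cancel_left _ (by norm_num : 0 < 2), Finset.sum_add_distrib]
  refine congrArg₂ (· + ·) ?_ ?_
  · rw [Finset.sum_filter, Finset.sum_filter]
  · refine Finset.sum_congr rfl fun p hp => ?_
    rw [Finset.mem_filter] at hp
    exact hoff _ _ hp.2
end

section
/- Let p ≥ 2 and let G = K_p[G_1, …, G_p] be a completely joined graph, where G_1, …, G_p are arbitrary finite graphs each having at least one vertex. Let S be a set of m ≥ 2 vertices of G and let I(S) = {1 ≤ i ≤ p : S ∩ V(G_i) ≠ ∅}. Then the Steiner distance of S in G satisfies: d_G(S) ≤ m if |I(S)| = 1, and d_G(S) = m − 1 if |I(S)| > 1. -/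
open SimpleGraph

/-- The *generalized composition* `H[G 1, …, G k]`: a vertex `u` of `G i` is adjacent to a
vertex `v` of `G j` iff either `i = j` and `u, v` are adjacent in `G i`, or `i ≠ j` and
`i, j` are adjacent in `H`.  A *completely joined graph* is `(⊤ : SimpleGraph (Fin p))[G 1, …, G p]`,
i.e. the generalized composition over the complete graph `K p`. -/
def genComp {k : ℕ} (H : SimpleGraph (Fin k)) {W : Fin k → Type*}
    (Gs : ∀ i, SimpleGraph (W i)) : SimpleGraph ((i : Fin k) × W i) :=
  SimpleGraph.fromRel fun u v =>
    (∃ h : u.1 = v.1, (Gs v.1).Adj (h ▸ u.2) v.2) ∨ H.Adj u.1 v.1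

theorem edgeSet_image_coe {V : Type*} {G : SimpleGraph V} (T : G.Subgraph) :
    T.edgeSet = (Sym2.map Subtype.val) '' T.coe.edgeSet := by
  ext e
  induction e using Sym2.ind with
  | _ a b =>
    constructor
    · intro h
      have h' : T.Adj a b := h
      exact ⟨s(⟨a, T.edge_vert h'⟩, ⟨b, T.edge_vert h'.symm⟩), h', rfl⟩
    · rintro ⟨e, he, h⟩
      induction e using Sym2.ind with
      | _ x y =>
        have he' : T.Adj x y := he
        rw [← h]
        exact he'

theorem ncard_edgeSet_coe {V : Type*} {G : SimpleGraph V} (T : G.Subgraph) :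
    T.edgeSet.ncard = Nat.card T.coe.edgeSet := by
  rw [edgeSet_image_coe, Set.ncard_image_of_injective _
    (Sym2.map.injective Subtype.val_injective)]
  rfl

theorem lower_aux {V : Type*} [Finite V] {G : SimpleGraph V} (S : Finset V) (T : G.Subgraph)
    (hT : T.Connected) (hS : (S : Set V) ⊆ T.verts) : S.card ≤ T.edgeSet.ncard + 1 := by
  rw [ncard_edgeSet_coe]
  have h1 := (Subgraph.connected_iff'.1 hT).card_vert_le_card_edgeSet_add_one
  have h2 : (S : Set V).ncard ≤ T.verts.ncard := Set.ncard_le_ncard hS (Set.toFinite _)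
  rw [Set.ncard_coe_finset] at h2
  exact h2.trans h1

theorem upper_aux {V : Type*} {G : SimpleGraph V} (S : Finset V)
    (hS : (G.induce (S : Set V)).Connected) :
    ∃ T : G.Subgraph, T.Connected ∧ T.verts = S ∧ T.edgeSet.ncard + 1 = S.card := by
  classical
  obtain ⟨T', hle, hT'⟩ := hS.exists_isTree_le
  let T : G.Subgraph :=
    { verts := S
      Adj := fun a b => ∃ (ha : a ∈ (S : Set V)) (hb : b ∈ (S : Set V)), T'.Adj ⟨a, ha⟩ ⟨b, hb⟩
      adj_sub := fun ⟨_, _, h⟩ => hle h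
      edge_vert := fun ⟨h, _, _⟩ => h
      symm := ⟨fun _ _ ⟨ha, hb, h⟩ => ⟨hb, ha, h.symm⟩⟩ }
  have hco : T.coe = T' := by
    ext a b
    exact ⟨fun ⟨_, _, h⟩ => h, fun h => ⟨a.2, b.2, h⟩⟩
  refine ⟨T, ?_, rfl, ?_⟩
  · rw [Subgraph.connected_iff', hco]
    exact hT'.1
  · rw [ncard_edgeSet_coe, hco]
    have := (isTree_iff_connected_and_card.1 hT').2
    rw [this]
    simp

theorem adj_of_ne {p : ℕ} {W : Fin p → Type*} (Gs : ∀ i, SimpleGraph (W i))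
    {u v : (i : Fin p) × W i} (h : u.1 ≠ v.1) :
    (genComp (⊤ : SimpleGraph (Fin p)) Gs).Adj u v := by
  refine (SimpleGraph.fromRel_adj _ _ _).2 ⟨fun e => h (congrArg _ e), Or.inl (Or.inr h)⟩

theorem conn_aux {p : ℕ} {W : Fin p → Type*} (Gs : ∀ i, SimpleGraph (W i))
    (S : Finset ((i : Fin p) × W i)) (h : ∃ u ∈ S, ∃ v ∈ S, u.1 ≠ v.1) :
    ((genComp (⊤ : SimpleGraph (Fin p)) Gs).induce (S : Set ((i : Fin p) × W i))).Connected := by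
  obtain ⟨u, hu, v, hv, huv⟩ := h
  have key : ∀ a b : (S : Set ((i : Fin p) × W i)), a.1.1 ≠ b.1.1 →
      ((genComp (⊤ : SimpleGraph (Fin p)) Gs).induce
        (S : Set ((i : Fin p) × W i))).Reachable a b := fun a b hab =>
    SimpleGraph.Adj.reachable (adj_of_ne Gs hab)
  rw [connected_iff_exists_forall_reachable]
  refine ⟨⟨u, hu⟩, fun w => ?_⟩
  by_cases hw : u.1 = w.1.1
  · exact (key ⟨u, hu⟩ ⟨v, hv⟩ huv).trans (key ⟨v, hv⟩ w fun e => huv (hw.trans e.symm))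
  · exact key _ _ hw

/-- Let `p ≥ 2` and let `G = K_p[G 1, …, G p]` be a completely joined
graph, where the `G i` are arbitrary finite graphs each having at least one vertex.
Let `S` be a set of `m ≥ 2` vertices of `G` and let `I(S) = {i : S ∩ V(G i) ≠ ∅}`.
Then the Steiner distance of `S` in `G` is at most `m` if `|I(S)| = 1` (i.e. `S` lies in
a single factor), and equals `m − 1` if `|I(S)| > 1` (i.e. `S` meets two factors). -/
theorem steinerDist_completelyJoined {p : ℕ} (hp : 2 ≤ p)
    {W : Fin p → Type*} [∀ i, Fintype (W i)] [∀ i, Nonempty (W i)]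
    (Gs : ∀ i, SimpleGraph (W i))
    (S : Finset ((i : Fin p) × W i)) (m : ℕ) (hm : 2 ≤ m) (hcard : S.card = m) :
    ((∃ i, ∀ v ∈ S, v.1 = i) →
        steinerDist (genComp (⊤ : SimpleGraph (Fin p)) Gs) (S : Set ((i : Fin p) × W i)) ≤ m) ∧
      ((∃ u ∈ S, ∃ v ∈ S, u.1 ≠ v.1) →
        steinerDist (genComp (⊤ : SimpleGraph (Fin p)) Gs) (S : Set ((i : Fin p) × W i)) = m - 1) := by
  classical
  constructor
  · rintro ⟨i, hi⟩
    have : Nontrivial (Fin p) := Fin.nontrivial_iff_two_le.2 hp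
    obtain ⟨j, hj⟩ := exists_ne i
    obtain ⟨w⟩ := (inferInstance : Nonempty (W j))
    obtain ⟨s, hs⟩ : S.Nonempty := Finset.card_pos.1 (by omega)
    have hw : (⟨j, w⟩ : (i : Fin p) × W i) ∉ S := fun h => hj (hi _ h)
    obtain ⟨T, hT, hv, hc⟩ := upper_aux _ (conn_aux Gs (insert ⟨j, w⟩ S)
      ⟨_, Finset.mem_insert_self _ _, s, Finset.mem_insert_of_mem hs, by
        rw [hi s hs]; exact hj⟩)
    rw [Finset.card_insert_of_notMem hw] at hc
    refine Nat.sInf_le ⟨T, hT, ?_, by omega⟩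
    rw [hv]
    exact_mod_cast Finset.subset_insert _ _
  · intro h
    obtain ⟨T, hT, hv, hc⟩ := upper_aux _ (conn_aux Gs S h)
    apply le_antisymm
    · exact Nat.sInf_le ⟨T, hT, hv.ge, by omega⟩
    · refine le_csInf ⟨_, T, hT, hv.ge, rfl⟩ ?_
      rintro n ⟨T, hT, hv, rfl⟩
      have := lower_aux S T hT hv
      omega
end

section
/- Let p ≥ 2 and let G = K_{n_1, …, n_p} be the complete multipartite graph with parts V_1, …, V_p of sizes n_1, …, n_p ≥ 1. Let S be a set of m ≥ 2 vertices of G. Then the Steiner distance of S in G equals m if S is contained in a single part V_i, and equals m − 1 if S meets at least two parts. -/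
open SimpleGraph

theorem steiner_aux_lower {V : Type*} [Finite V] {G : SimpleGraph V} (T : G.Subgraph)
    (h : T.Connected) : T.verts.ncard ≤ T.edgeSet.ncard + 1 := by
  have h1 := h.coe.card_vert_le_card_edgeSet_add_one
  rw [← Subgraph.image_coe_edgeSet_coe,
    Set.ncard_image_of_injective _ (Sym2.map.injective Subtype.val_injective)]
  simpa [Set.ncard] using h1

theorem steiner_aux_upper {V : Type*} [Finite V] {G : SimpleGraph V} (W : Set V)
    (h : (G.induce W).Connected) :
    ∃ T : G.Subgraph, T.Connected ∧ T.verts = W ∧ T.edgeSet.ncard + 1 = W.ncard := by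
  classical
  obtain ⟨T', hle, hT⟩ := h.exists_isTree_le
  let T : G.Subgraph :=
    { verts := W
      Adj := fun a b => ∃ ha hb, T'.Adj ⟨a, ha⟩ ⟨b, hb⟩
      adj_sub := by
        rintro a b ⟨ha, hb, hab⟩
        exact hle hab
      edge_vert := by
        rintro a b ⟨ha, hb, hab⟩
        exact ha
      symm := ⟨by
        rintro a b ⟨ha, hb, hab⟩
        exact ⟨hb, ha, hab.symm⟩⟩ }
  have hcoe : T.coe = T' := by
    ext a b
    constructor
    · rintro ⟨_, _, h⟩
      exact h
    · intro h
      exact ⟨a.2, b.2, h⟩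
  refine ⟨T, ⟨hcoe ▸ hT.connected⟩, rfl, ?_⟩
  have : Fintype W := Fintype.ofFinite W
  have : Fintype T'.edgeSet := Fintype.ofFinite _
  have h2 := hT.card_edgeFinset
  rw [← Subgraph.image_coe_edgeSet_coe,
    Set.ncard_image_of_injective _ (Sym2.map.injective Subtype.val_injective), hcoe]
  rw [← Nat.card_eq_fintype_card, ← Set.ncard_coe_finset, coe_edgeFinset] at h2
  exact h2

theorem steiner_aux_conn {ι : Type*} {F : ι → Type*} (W : Set ((i : ι) × F i))
    (u v : (i : ι) × F i) (hu : u ∈ W) (hv : v ∈ W) (huv : u.1 ≠ v.1) :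
    ((completeMultipartiteGraph F).induce W).Connected := by
  rw [connected_iff_exists_forall_reachable]
  have key : ∀ a b : W, a.1.1 ≠ b.1.1 →
      ((completeMultipartiteGraph F).induce W).Reachable a b := by
    intro a b h
    apply Adj.reachable
    exact h
  refine ⟨⟨u, hu⟩, fun w => ?_⟩
  by_cases hw : u.1 = w.1.1
  · exact (key _ ⟨v, hv⟩ huv).trans (key _ _ (by rw [← hw]; exact huv.symm))
  · exact key _ _ hw

/-- Let `p ≥ 2` and let `G = K_{n 1, …, n p}` be the complete
multipartite graph with parts `V 1, …, V p` of sizes `n 1, …, n p ≥ 1` (realized with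
part `V i = Fin (n i)`).  Let `S` be a set of `m ≥ 2` vertices of `G`.  Then the Steiner
distance of `S` in `G` equals `m` if `S` is contained in a single part, and equals
`m − 1` if `S` meets at least two parts. -/
theorem steinerDist_completeMultipartite {p : ℕ} (hp : 2 ≤ p)
    (n : Fin p → ℕ) (hn : ∀ i, 1 ≤ n i)
    (S : Finset ((i : Fin p) × Fin (n i))) (m : ℕ) (hm : 2 ≤ m) (hcard : S.card = m) :
    ((∃ i, ∀ v ∈ S, v.1 = i) →
        steinerDist (completeMultipartiteGraph fun i => Fin (n i))
          (S : Set ((i : Fin p) × Fin (n i))) = m) ∧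
      ((∃ u ∈ S, ∃ v ∈ S, u.1 ≠ v.1) →
        steinerDist (completeMultipartiteGraph fun i => Fin (n i))
          (S : Set ((i : Fin p) × Fin (n i))) = m - 1) := by
  have hSc : (S : Set ((i : Fin p) × Fin (n i))).ncard = m := by
    rw [Set.ncard_coe_finset, hcard]
  constructor
  · rintro ⟨i, hi⟩
    have : Nontrivial (Fin p) := Fin.nontrivial_iff_two_le.2 hp
    obtain ⟨j, hj⟩ := exists_ne i
    obtain ⟨u, hu⟩ : S.Nonempty := Finset.card_pos.1 (by omega)
    let x : (i : Fin p) × Fin (n i) := ⟨j, ⟨0, hn j⟩⟩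
    have hx : x ∉ (S : Set ((i : Fin p) × Fin (n i))) := fun h => hj (hi x h)
    obtain ⟨T, hT, hv, he⟩ := steiner_aux_upper _ (steiner_aux_conn (insert x (S : Set _)) u x
      (Set.mem_insert_of_mem _ hu) (Set.mem_insert _ _) (by rw [hi u hu]; exact hj.symm))
    rw [Set.ncard_insert_of_notMem hx, hSc] at he
    refine le_antisymm (Nat.sInf_le ⟨T, hT, ?_, by omega⟩) (le_csInf ⟨_, T, hT, ?_, rfl⟩ ?_)
    · rw [hv]; exact Set.subset_insert _ _
    · rw [hv]; exact Set.subset_insert _ _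
    · rintro k ⟨T, hT, hS, rfl⟩
      have h1 := steiner_aux_lower T hT
      have h2 := Set.ncard_le_ncard hS
      obtain ⟨e, he⟩ : T.edgeSet.Nonempty := (Set.ncard_pos (Set.toFinite _)).1 (by omega)
      have h3 : ∃ a ∈ T.verts, a ∉ (S : Set ((i : Fin p) × Fin (n i))) := by
        induction e with
        | _ a b =>
          have hab : T.Adj a b := he
          by_contra! hc
          have hne : a.1 ≠ b.1 := T.adj_sub hab
          exact hne ((hi a (hc a hab.fst_mem)).trans (hi b (hc b hab.snd_mem)).symm)
      obtain ⟨a, ha, haS⟩ := h3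
      have h4 := Set.ncard_le_ncard (Set.insert_subset ha hS)
      rw [Set.ncard_insert_of_notMem haS] at h4
      omega
  · rintro ⟨u, hu, v, hv, huv⟩
    obtain ⟨T, hT, hv, he⟩ := steiner_aux_upper _ (steiner_aux_conn (S : Set _) u v hu hv huv)
    refine le_antisymm (Nat.sInf_le ⟨T, hT, hv.ge, by omega⟩)
      (le_csInf ⟨_, T, hT, hv.ge, rfl⟩ ?_)
    rintro k ⟨T, hT, hS, rfl⟩
    have h1 := steiner_aux_lower T hT
    have h2 := Set.ncard_le_ncard hS
    omega
end
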